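/- arXiv:1903.00543 — 4 statements merged into one kernel-verified Lean document; each statement's English description precedes it below -/
import Mathlib

section
/- Let S be a nonempty finite set, θ : S → ℝ with θ_i > 0 for all i ∈ S, let a ∈ S and Λ > 0, and write θ_S = Σ_{i∈S} θ_i. Define probability mass functions p and q on S by p_i = θ_i/θ_S for all i ∈ S, q_i = θ_i/(θ_S + Λ) for i ≠ a, and q_a = (θ_a + Λ)/(θ_S + Λ). Then Σ_{i∈S} p_i²/q_i − 1 = Λ²(θ_S − θ_a)/(θ_S² (θ_a + Λ)). -/
open Finset

theorem stmt_2 {ι : Type*} [DecidableEq ι] (S : Finset ι) (hS : S.Nonempty)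
    (θ : ι → ℝ) (hθ : ∀ i ∈ S, 0 < θ i) (a : ι) (ha : a ∈ S) (Λ : ℝ) (hΛ : 0 < Λ) :
    (∑ i ∈ S, (θ i / ∑ j ∈ S, θ j) ^ 2 /
        (if i = a then (θ a + Λ) / ((∑ j ∈ S, θ j) + Λ)
          else θ i / ((∑ j ∈ S, θ j) + Λ))) - 1 =
      Λ ^ 2 * ((∑ j ∈ S, θ j) - θ a) / ((∑ j ∈ S, θ j) ^ 2 * (θ a + Λ)) := by
  have hT : 0 < ∑ j ∈ S, θ j := Finset.sum_pos hθ hS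
  have hsum : θ a + ∑ i ∈ S.erase a, θ i = ∑ j ∈ S, θ j := Finset.add_sum_erase S θ ha
  generalize (∑ j ∈ S, θ j) = T at hT hsum ⊢
  have hpa := hθ a ha
  have h1 : ∑ i ∈ S.erase a, (θ i / T) ^ 2 /
      (if i = a then (θ a + Λ) / (T + Λ) else θ i / (T + Λ)) =
      ∑ i ∈ S.erase a, θ i * ((T + Λ) / T ^ 2) := by
    refine Finset.sum_congr rfl fun i hi => ?_
    have hi' := Finset.mem_erase.mp hi
    have hpi := hθ i hi'.2
    rw [if_neg hi'.1]
    field_simp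
  have h2 : ∑ i ∈ S.erase a, θ i = T - θ a := by linarith
  rw [← Finset.add_sum_erase S _ ha, h1, ← Finset.sum_mul, h2, if_pos rfl]
  field_simp
  ring
end

section
/- Let S be a nonempty finite set, θ : S → ℝ with θ_i > 0 for all i ∈ S, let a ∈ S and Λ > 0, and write θ_S = Σ_{i∈S} θ_i. Define probability mass functions p and q on S by p_i = θ_i/θ_S for all i ∈ S, q_i = θ_i/(θ_S + Λ) for i ≠ a, and q_a = (θ_a + Λ)/(θ_S + Λ). Then the Kullback–Leibler divergence satisfies Σ_{i∈S} p_i · ln(p_i/q_i) ≤ Λ²(θ_S − θ_a)/(θ_S² (θ_a + Λ)) ≤ Λ²/(θ_S (θ_a + Λ)). -/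
open Finset

theorem stmt_3 {ι : Type*} [DecidableEq ι] (S : Finset ι) (hS : S.Nonempty)
    (θ : ι → ℝ) (hθ : ∀ i ∈ S, 0 < θ i) (a : ι) (ha : a ∈ S) (Λ : ℝ) (hΛ : 0 < Λ) :
    (∑ i ∈ S, (θ i / ∑ j ∈ S, θ j) *
        Real.log ((θ i / ∑ j ∈ S, θ j) /
          (if i = a then (θ a + Λ) / ((∑ j ∈ S, θ j) + Λ)
            else θ i / ((∑ j ∈ S, θ j) + Λ)))) ≤
        Λ ^ 2 * ((∑ j ∈ S, θ j) - θ a) / ((∑ j ∈ S, θ j) ^ 2 * (θ a + Λ)) ∧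
      Λ ^ 2 * ((∑ j ∈ S, θ j) - θ a) / ((∑ j ∈ S, θ j) ^ 2 * (θ a + Λ)) ≤
        Λ ^ 2 / ((∑ j ∈ S, θ j) * (θ a + Λ)) := by
  have hle : θ a ≤ ∑ j ∈ S, θ j :=
    Finset.single_le_sum (fun i hi => (hθ i hi).le) ha
  have hsum : ∑ j ∈ S.erase a, θ j = (∑ j ∈ S, θ j) - θ a := by
    rw [← Finset.add_sum_erase S θ ha]; ring
  have hpa := hθ a ha
  rw [← Finset.add_sum_erase S (fun i => (θ i / ∑ j ∈ S, θ j) *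
        Real.log ((θ i / ∑ j ∈ S, θ j) /
          (if i = a then (θ a + Λ) / ((∑ j ∈ S, θ j) + Λ)
            else θ i / ((∑ j ∈ S, θ j) + Λ)))) ha]
  generalize (∑ j ∈ S, θ j) = T at *
  have hT : 0 < T := hpa.trans_le hle
  constructor
  · have h1 : ∑ i ∈ S.erase a, (θ i / T) * Real.log ((θ i / T) /
          (if i = a then (θ a + Λ) / (T + Λ) else θ i / (T + Λ)))
        ≤ (T - θ a) * (Λ / T ^ 2) := by
      rw [← hsum, Finset.sum_mul]
      refine Finset.sum_le_sum fun i hi => ?_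
      have hi' := Finset.mem_erase.mp hi
      have hpi := hθ i hi'.2
      rw [if_neg hi'.1]
      have hl : Real.log ((θ i / T) / (θ i / (T + Λ))) ≤ Λ / T := by
        refine (Real.log_le_sub_one_of_pos (by positivity)).trans (le_of_eq ?_)
        field_simp
        ring
      refine (mul_le_mul_of_nonneg_left hl (by positivity)).trans (le_of_eq ?_)
      field_simp
    have h2 : (θ a / T) * Real.log ((θ a / T) / ((θ a + Λ) / (T + Λ)))
        ≤ (θ a / T) * ((θ a / T) / ((θ a + Λ) / (T + Λ)) - 1) :=
      mul_le_mul_of_nonneg_left (Real.log_le_sub_one_of_pos (by positivity)) (by positivity)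
    simp only [if_true]
    refine (add_le_add h2 h1).trans (le_of_eq ?_)
    field_simp
    ring
  · rw [div_le_div_iff₀ (by positivity) (by positivity)]
    have : 0 ≤ Λ ^ 2 * T * (θ a + Λ) * θ a := by positivity
    nlinarith
end

section
/- Let S be a finite set of size k ≥ 2, let a ∈ S, let θ > 0, Λ > 0, and let 1 ≤ m ≤ k − 1. Let p be the top-m ranking distribution on S when every item of S has weight θ (so p(σ) = Π_{i=1}^m 1/(k − i + 1) for every ranking σ of m distinct items of S), and let q be the top-m ranking distribution on S with weights w_i = θ for i ≠ a and w_a = θ + Λ. Then the Kullback–Leibler divergence satisfies Σ_σ p(σ) · ln(p(σ)/q(σ)) ≤ m·Λ²/(k·θ·(θ + Λ)), where the sum ranges over all rankings σ of m distinct items of S. -/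
open Finset

/-- The probability of observing the ordered list `σ = (σ 0, …, σ (m-1))` of `m` distinct
items of `S` under top-`m` ranking feedback from `S` with weights `w`:
`∏_{i=1}^m w_{σ(i)} / Σ_{j ∈ S ∖ {σ(1),…,σ(i−1)}} w_j`. -/
noncomputable def topMProb {ι : Type*} [DecidableEq ι] (S : Finset ι) (w : ι → ℝ) {m : ℕ}
    (σ : Fin m ↪ {x // x ∈ S}) : ℝ :=
  ∏ i : Fin m,
    w (σ i : ι) /
      ∑ j ∈ S \ (Finset.univ.filter fun i' : Fin m => i' < i).image fun i' => ((σ i' : {x // x ∈ S}) : ι),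
        w j


lemma hit_count {α : Type*} [Fintype α] [DecidableEq α] (m : ℕ) (i : Fin m) (a : α) :
    (Fintype.card α : ℝ) * ∑ σ : Fin m ↪ α, (if σ i = a then (1 : ℝ) else 0) =
      (Fintype.card (Fin m ↪ α) : ℝ) := by
  have h : ∀ b : α, ∑ σ : Fin m ↪ α, (if σ i = b then (1 : ℝ) else 0) =
      ∑ σ : Fin m ↪ α, (if σ i = a then (1 : ℝ) else 0) := by
    intro b
    refine Fintype.sum_equiv (Equiv.embeddingCongr (Equiv.refl _) (Equiv.swap a b)) _ _ ?_
    intro σ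
    have : (Equiv.embeddingCongr (Equiv.refl (Fin m)) (Equiv.swap a b) σ) i
        = Equiv.swap a b (σ i) := by simp [Equiv.embeddingCongr]
    rw [this]
    have h2 : Equiv.swap a b (σ i) = a ↔ σ i = b := by
      rw [Equiv.swap_apply_eq_iff, Equiv.swap_apply_left]
    simp only [h2]
  have h3 : ∑ b : α, ∑ σ : Fin m ↪ α, (if σ i = b then (1 : ℝ) else 0) =
      (Fintype.card (Fin m ↪ α) : ℝ) := by
    rw [Finset.sum_comm]
    simp
  rw [← h3, Finset.sum_congr rfl (fun b _ => h b)]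
  simp

lemma rem_card {ι : Type*} [DecidableEq ι] (S : Finset ι) {m : ℕ}
    (σ : Fin m ↪ {x // x ∈ S}) (i : Fin m) :
    (((S \ (Finset.univ.filter fun i' : Fin m => i' < i).image
      fun i' => ((σ i' : {x // x ∈ S}) : ι)).card : ℕ) : ℝ) = (S.card : ℝ) - (i : ℕ) := by
  have hsub : (Finset.univ.filter fun i' : Fin m => i' < i).image
      (fun i' => ((σ i' : {x // x ∈ S}) : ι)) ⊆ S := by
    intro x hx
    simp only [Finset.mem_image] at hx
    obtain ⟨j, _, rfl⟩ := hx
    exact (σ j).2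
  have hc : ((Finset.univ.filter fun i' : Fin m => i' < i).image
      (fun i' => ((σ i' : {x // x ∈ S}) : ι))).card = (i : ℕ) := by
    rw [Finset.card_image_of_injective _ (fun x y h => σ.injective (Subtype.ext h))]
    have : (Finset.univ.filter fun i' : Fin m => i' < i) = Finset.Iio i := by ext; simp
    rw [this, Fin.card_Iio]
  rw [Finset.cast_card_sdiff hsub, hc]

lemma rem_ind {ι : Type*} [DecidableEq ι] (S : Finset ι) {m : ℕ} (a : ι) (ha : a ∈ S)
    (σ : Fin m ↪ {x // x ∈ S}) (i : Fin m) :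
    (if a ∈ S \ (Finset.univ.filter fun i' : Fin m => i' < i).image
      (fun i' => ((σ i' : {x // x ∈ S}) : ι)) then (1 : ℝ) else 0) =
    1 - ∑ j ∈ Finset.Iio i, (if σ j = ⟨a, ha⟩ then (1 : ℝ) else 0) := by
  by_cases h : ∃ j, j < i ∧ σ j = ⟨a, ha⟩
  · obtain ⟨j, hj, hja⟩ := h
    have h1 : a ∉ S \ (Finset.univ.filter fun i' : Fin m => i' < i).image
      (fun i' => ((σ i' : {x // x ∈ S}) : ι)) := by
      simp only [Finset.mem_sdiff, Finset.mem_image, Finset.mem_filter, not_and, not_not]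
      intro _
      exact ⟨j, ⟨Finset.mem_univ _, hj⟩, by rw [hja]⟩
    rw [if_neg h1, Finset.sum_eq_single j]
    · simp [hja]
    · intro b _ hb
      rw [if_neg]
      intro hb2
      exact hb (σ.injective (hb2.trans hja.symm))
    · intro hh
      exact absurd (Finset.mem_Iio.2 hj) hh
  · push Not at h
    have h1 : a ∈ S \ (Finset.univ.filter fun i' : Fin m => i' < i).image
      (fun i' => ((σ i' : {x // x ∈ S}) : ι)) := by
      simp only [Finset.mem_sdiff, Finset.mem_image, Finset.mem_filter]
      refine ⟨ha, ?_⟩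
      rintro ⟨j, ⟨_, hj⟩, hja⟩
      exact h j hj (Subtype.ext hja)
    rw [if_pos h1, Finset.sum_eq_zero]
    · simp
    · intro j hj
      rw [if_neg (h j (Finset.mem_Iio.1 hj))]

lemma unif_prob {ι : Type*} [DecidableEq ι] (S : Finset ι) (θ : ℝ) (hθ : 0 < θ) {m : ℕ}
    (hm : m ≤ S.card) (σ : Fin m ↪ {x // x ∈ S}) :
    topMProb S (fun _ => θ) σ = ((Fintype.card (Fin m ↪ {x // x ∈ S}) : ℕ) : ℝ)⁻¹ := by
  rw [Fintype.card_embedding_eq, Fintype.card_coe, Fintype.card_fin,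
    Nat.descFactorial_eq_prod_range, ← Fin.prod_univ_eq_prod_range (fun i => S.card - i),
    Nat.cast_prod, ← Finset.prod_inv_distrib]
  unfold topMProb
  refine Finset.prod_congr rfl fun i _ => ?_
  rw [Finset.sum_const, nsmul_eq_mul, rem_card, Nat.cast_sub (by omega)]
  have : ((i : ℕ) : ℝ) < S.card := by exact_mod_cast (lt_of_lt_of_le i.2 hm)
  have : (S.card : ℝ) - (i : ℕ) ≠ 0 := by linarith
  field_simp

lemma log_bound {ι : Type*} [DecidableEq ι] (S : Finset ι) (a : ι) (ha : a ∈ S) (θ Λ : ℝ)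
    (hθ : 0 < θ) (hΛ : 0 < Λ) {m : ℕ} (hm : m ≤ S.card) (σ : Fin m ↪ {x // x ∈ S}) :
    Real.log (topMProb S (fun _ => θ) σ /
            topMProb S (fun i => if i = a then θ + Λ else θ) σ) ≤
    ∑ i : Fin m, ((1 - ∑ j ∈ Finset.Iio i, (if σ j = ⟨a, ha⟩ then (1 : ℝ) else 0)) *
        (Λ / (θ * ((S.card : ℝ) - (i : ℕ))))
      - (if σ i = ⟨a, ha⟩ then (1 : ℝ) else 0) * (Λ / (θ + Λ))) := by
  have key : ∀ i : Fin m, ∃ x : ℝ, 0 < x ∧ 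
      (fun _ => θ) (σ i : ι) / (∑ j ∈ S \ (Finset.univ.filter fun i' : Fin m => i' < i).image
        (fun i' => ((σ i' : {x // x ∈ S}) : ι)), (fun _ => θ) j) /
      ((if (σ i : ι) = a then θ + Λ else θ) /
       (∑ j ∈ S \ (Finset.univ.filter fun i' : Fin m => i' < i).image
        (fun i' => ((σ i' : {x // x ∈ S}) : ι)), (if j = a then θ + Λ else θ))) = x ∧
      Real.log x ≤ (1 - ∑ j ∈ Finset.Iio i, (if σ j = ⟨a, ha⟩ then (1 : ℝ) else 0)) *
        (Λ / (θ * ((S.card : ℝ) - (i : ℕ))))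
      - (if σ i = ⟨a, ha⟩ then (1 : ℝ) else 0) * (Λ / (θ + Λ)) := by
    intro i
    refine ⟨_, ?_, rfl, ?_⟩
    all_goals
      have hn : (0 : ℝ) < (S.card : ℝ) - (i : ℕ) := by
        have : ((i : ℕ) : ℝ) < S.card := by exact_mod_cast (lt_of_lt_of_le i.2 hm)
        linarith
      have hc := rem_card S σ i
      try rw [← rem_ind S a ha σ i]
      generalize (S \ (Finset.univ.filter fun i' : Fin m => i' < i).image
        (fun i' => ((σ i' : {x // x ∈ S}) : ι))) = R at *
      have hs : ∑ j ∈ R, (if j = a then θ + Λ else θ) =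
          ((S.card : ℝ) - (i : ℕ)) * θ + (if a ∈ R then (1 : ℝ) else 0) * Λ := by
        have : ∀ j, (if j = a then θ + Λ else θ) = θ + (if j = a then Λ else 0) := by
          intro j; split_ifs <;> simp
        simp only [this, Finset.sum_add_distrib, Finset.sum_const, nsmul_eq_mul, hc]
        simp
      have hw : (σ i : ι) = a ↔ σ i = ⟨a, ha⟩ := by
        rw [Subtype.ext_iff]
      simp only [hs, hw, Finset.sum_const, nsmul_eq_mul, hc]
      generalize (S.card : ℝ) - (i : ℕ) = n at *
      have hI : (0 : ℝ) ≤ (if a ∈ R then (1 : ℝ) else 0) := by split_ifs <;> simp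
      generalize (if a ∈ R then (1 : ℝ) else 0) = I at *
    · split_ifs <;> positivity
    · have hA : Real.log ((n * θ + I * Λ) / (n * θ)) ≤ I * (Λ / (θ * n)) := by
        refine (Real.log_le_sub_one_of_pos (by positivity)).trans (le_of_eq ?_)
        field_simp
        ring
      have hB : Real.log (θ / (if σ i = ⟨a, ha⟩ then θ + Λ else θ)) ≤
          - ((if σ i = ⟨a, ha⟩ then (1 : ℝ) else 0) * (Λ / (θ + Λ))) := by
        split_ifs
        · refine (Real.log_le_sub_one_of_pos (by positivity)).trans (le_of_eq ?_)
          field_simp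
          ring
        · simp [hθ.ne']
      have hwp : 0 < (if σ i = ⟨a, ha⟩ then θ + Λ else θ) := by
        split_ifs <;> positivity
      generalize (if σ i = ⟨a, ha⟩ then θ + Λ else θ) = W at *
      have he : θ / (n * θ) / (W / (n * θ + I * Λ)) = 
          ((n * θ + I * Λ) / (n * θ)) * (θ / W) := by
        field_simp
      rw [he, Real.log_mul (by positivity) (by positivity)]
      linarith
  choose x hx0 hx hxl using key
  unfold topMProb
  rw [← Finset.prod_div_distrib, Finset.prod_congr rfl (fun i _ => hx i),
    Real.log_prod (fun i _ => (hx0 i).ne')]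
  exact Finset.sum_le_sum fun i _ => hxl i

theorem stmt_4 {ι : Type*} [DecidableEq ι] (S : Finset ι) (k : ℕ) (hk : S.card = k)
    (hk2 : 2 ≤ k) (a : ι) (ha : a ∈ S) (θ Λ : ℝ) (hθ : 0 < θ) (hΛ : 0 < Λ)
    (m : ℕ) (hm1 : 1 ≤ m) (hm : m ≤ k - 1) :
    ∑ σ : Fin m ↪ {x // x ∈ S},
        topMProb S (fun _ => θ) σ *
          Real.log (topMProb S (fun _ => θ) σ /
            topMProb S (fun i => if i = a then θ + Λ else θ) σ) ≤
      m * Λ ^ 2 / (k * θ * (θ + Λ)) := by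
  subst hk
  have hmS : m ≤ S.card := by omega
  have hk0 : (0 : ℝ) < S.card := by exact_mod_cast (by omega : 0 < S.card)
  have hN : (0 : ℝ) < (Fintype.card (Fin m ↪ {x // x ∈ S}) : ℕ) := by
    rw [Fintype.card_embedding_eq, Fintype.card_coe, Fintype.card_fin]
    exact_mod_cast Nat.descFactorial_pos.2 hmS
  have hit : ∀ i : Fin m, ∑ σ : Fin m ↪ {x // x ∈ S},
      (if σ i = ⟨a, ha⟩ then (1 : ℝ) else 0) =
        (Fintype.card (Fin m ↪ {x // x ∈ S}) : ℕ) / (S.card : ℝ) := by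
    intro i
    have := hit_count m i (⟨a, ha⟩ : {x // x ∈ S})
    rw [Fintype.card_coe] at this
    rw [eq_div_iff hk0.ne', mul_comm]
    exact this
  simp only [unif_prob S θ hθ hmS] 
  have h1 : ∀ σ : Fin m ↪ {x // x ∈ S}, _ := fun σ => log_bound S a ha θ Λ hθ hΛ hmS σ
  simp only [unif_prob S θ hθ hmS] at h1
  rw [← Finset.mul_sum]
  refine (mul_le_mul_of_nonneg_left (Finset.sum_le_sum fun σ _ => h1 σ)
    (inv_nonneg.2 hN.le)).trans (le_of_eq ?_)
  rw [Finset.sum_comm]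
  have h2 : ∀ i : Fin m, ∑ σ : Fin m ↪ {x // x ∈ S},
      ((1 - ∑ j ∈ Finset.Iio i, (if σ j = ⟨a, ha⟩ then (1 : ℝ) else 0)) *
        (Λ / (θ * ((S.card : ℝ) - (i : ℕ))))
      - (if σ i = ⟨a, ha⟩ then (1 : ℝ) else 0) * (Λ / (θ + Λ))) =
      (Fintype.card (Fin m ↪ {x // x ∈ S}) : ℕ) * (Λ ^ 2 / (S.card * θ * (θ + Λ))) := by
    intro i
    have hn : (0 : ℝ) < (S.card : ℝ) - (i : ℕ) := by
      have : ((i : ℕ) : ℝ) < S.card := by exact_mod_cast (lt_of_lt_of_le i.2 hmS)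
      linarith
    rw [Finset.sum_sub_distrib, ← Finset.sum_mul, ← Finset.sum_mul, hit i,
      Finset.sum_sub_distrib, Finset.sum_comm, Finset.sum_congr rfl (fun j _ => hit j)]
    simp only [Finset.sum_const, Finset.card_univ, nsmul_eq_mul, mul_one, Fin.card_Iio]
    field_simp
    ring
  rw [Finset.sum_congr rfl (fun i _ => h2 i)]
  simp only [Finset.sum_const, Finset.card_univ, nsmul_eq_mul, Fintype.card_fin]
  field_simp
end

section
/- Let S be a finite set with |S| = k ≥ 1, let θ > 0 and ε > 0, let θ' : S → ℝ satisfy θ'_i ≥ θ for all i ∈ S, and let a ∈ S with θ'_a = θ. Write θ_S = Σ_{i∈S} θ'_i. Define probability mass functions p and q on S by p_i = θ'_i/θ_S for all i ∈ S, q_i = θ'_i/(θ_S + 2ε) for i ≠ a, and q_a = (θ + 2ε)/(θ_S + 2ε). Then Σ_{i∈S} p_i · ln(p_i/q_i) ≤ 4ε²/(k·θ·(θ + 2ε)). -/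
open Finset

theorem stmt_16 {ι : Type*} [DecidableEq ι] (S : Finset ι) (k : ℕ)
    (hk : S.card = k) (hk1 : 1 ≤ k)
    (θ ε : ℝ) (hθ : 0 < θ) (hε : 0 < ε)
    (θ' : ι → ℝ) (hθ' : ∀ i ∈ S, θ ≤ θ' i)
    (a : ι) (ha : a ∈ S) (haθ : θ' a = θ) :
    ∑ i ∈ S, (θ' i / ∑ j ∈ S, θ' j) *
        Real.log ((θ' i / ∑ j ∈ S, θ' j) /
          (if i = a then (θ + 2 * ε) / ((∑ j ∈ S, θ' j) + 2 * ε)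
            else θ' i / ((∑ j ∈ S, θ' j) + 2 * ε))) ≤
      4 * ε ^ 2 / (k * θ * (θ + 2 * ε)) := by
  have hTk : (k : ℝ) * θ ≤ ∑ j ∈ S, θ' j := by
    have h := Finset.card_nsmul_le_sum S θ' θ hθ'
    rw [hk, nsmul_eq_mul] at h
    exact h
  have hk0 : (0 : ℝ) < k := by exact_mod_cast hk1
  have hkθ : 0 < (k : ℝ) * θ := mul_pos hk0 hθ
  obtain ⟨T, hT⟩ : ∃ T, T = ∑ j ∈ S, θ' j := ⟨_, rfl⟩
  rw [← hT] at hTk ⊢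
  have hT0 : 0 < T := lt_of_lt_of_le hkθ hTk
  have hlog : Real.log ((T + 2 * ε) / T) ≤ 2 * ε / T := by
    have h := Real.log_le_sub_one_of_pos (show 0 < (T + 2 * ε) / T by positivity)
    have e : (T + 2 * ε) / T - 1 = 2 * ε / T := by field_simp; ring
    rwa [e] at h
  have hlog2 : Real.log (θ / (θ + 2 * ε)) ≤ -(2 * ε / (θ + 2 * ε)) := by
    have h := Real.log_le_sub_one_of_pos (show 0 < θ / (θ + 2 * ε) by positivity)
    have e : θ / (θ + 2 * ε) - 1 = -(2 * ε / (θ + 2 * ε)) := by field_simp; ring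
    rwa [e] at h
  have hterm : ∀ i ∈ S, (θ' i / T) * Real.log ((θ' i / T) /
      (if i = a then (θ + 2 * ε) / (T + 2 * ε) else θ' i / (T + 2 * ε))) ≤
      θ' i / T * (2 * ε / T) +
        (if i = a then θ / T * (-(2 * ε / (θ + 2 * ε))) else 0) := by
    intro i hi
    have hi0 : 0 < θ' i := lt_of_lt_of_le hθ (hθ' i hi)
    split_ifs with h
    · subst h
      rw [haθ, ← mul_add]
      have e : θ / T / ((θ + 2 * ε) / (T + 2 * ε)) =
          ((T + 2 * ε) / T) * (θ / (θ + 2 * ε)) := by field_simp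
      rw [e, Real.log_mul (by positivity) (by positivity)]
      exact mul_le_mul_of_nonneg_left (add_le_add hlog hlog2) (by positivity)
    · have e : θ' i / T / (θ' i / (T + 2 * ε)) = (T + 2 * ε) / T := by field_simp
      rw [e, add_zero]
      exact mul_le_mul_of_nonneg_left hlog (by positivity)
  refine (Finset.sum_le_sum hterm).trans ?_
  rw [Finset.sum_add_distrib, ← Finset.sum_mul, ← Finset.sum_div, ← hT,
    Finset.sum_ite_eq' S a, if_pos ha, div_self hT0.ne']
  have e : 1 * (2 * ε / T) + θ / T * (-(2 * ε / (θ + 2 * ε))) =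
      4 * ε ^ 2 / (T * (θ + 2 * ε)) := by field_simp; ring
  rw [e]
  gcongr
end
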